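/- For any real numbers α, β, T with |α| ≤ 1, |β − π| < 1, and T > 0, there exists a unique solution x(t) of the pendulum equation ẍ + sin x = 0 on [0,T] satisfying x(0) = α, x(T) = β, and α ≤ x(t) ≤ max(β, π) for all 0 ≤ t ≤ T. Moreover this solution depends smoothly on the parameters (T, α, β). -/

import Mathlib

/-- `IsPendSolOn x v s` : on the set `s`, `x` solves the pendulum equation
`ẍ + sin x = 0`, with velocity `v`. -/
def IsPendSolOn (x v : ℝ → ℝ) (s : Set ℝ) : Prop :=
  ∀ t ∈ s, HasDerivAt x (v t) t ∧ HasDerivAt v (-Real.sin (x t)) t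

/-- The boundary value problem of the Pendulum Lemma (first case):
a solution of `ẍ + sin x = 0` on `[0,T]` with `x(0) = α`, `x(T) = β`,
confined to `[α, max β π]`. -/
def PendBVP (x : ℝ → ℝ) (T α β : ℝ) : Prop :=
  (∃ v : ℝ → ℝ, IsPendSolOn x v (Set.Icc 0 T)) ∧
  x 0 = α ∧ x T = β ∧ ∀ t ∈ Set.Icc 0 T, α ≤ x t ∧ x t ≤ max β Real.pi

/-!
The flow of the pendulum equation is smooth because, on short time intervals, an orbit is the fixed
point of the Picard operator, a smooth contraction of a space of paths depending smoothly on the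
time and on the initial state; the group law removes the restriction on time.

The boundary value problem is solved by shooting: among the velocities `v` for which the solution
from `α` stays above `α` and arrives at `β` or higher, the least one arrives exactly at `β`.
Uniqueness and smooth dependence both rest on the strict monotonicity of the terminal angle in `v`,
that is, on the positivity at time `T` of the Jacobi field `J` with `J(0) = 0` and `J̇(0) = 1` along
a solution `x` with velocity `y`. The Wronskian identity `J̇ y + J sin x = y(0)` gives
`(J / y)' = y(0) / y²`, which settles the case of a positive velocity, hence that of nonnegative
energy. When the energy is negative, let `e` be its sum with `1` and `m = 2 e + π / 2`. The quotient
`(y(0) x - m J) / y` is nondecreasing as long as `|x| ≤ π / 2`, because `2 cos x + x sin x ≥ π / 2`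
there. When `x` reaches `π / 2` this yields `J < y(0)`, so `J̇ > 0` by the Wronskian identity. From
then on `π / 2 ≤ x < π`, where `cos x ≤ 0` keeps `J J̇` nondecreasing and `J` cannot vanish.
-/

open Set Filter Metric
open scoped ContDiff Topology NNReal

section Superposition

universe u

variable {K : Type*} [TopologicalSpace K] [CompactSpace K]
  {E F : Type u} [NormedAddCommGroup E] [NormedSpace ℝ E] [NormedAddCommGroup F] [NormedSpace ℝ F]

/-- Pointwise application of a continuous field of operators to a continuous field of vectors; it
is the shape of the derivative of a superposition operator `u ↦ f ∘ u`. -/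
noncomputable def pointwiseApply : C(K, E →L[ℝ] F) →L[ℝ] C(K, E) →L[ℝ] C(K, F) :=
  LinearMap.mkContinuous₂
    (LinearMap.mk₂ ℝ (fun (A : C(K, E →L[ℝ] F)) (u : C(K, E)) =>
        (⟨fun k => A k (u k), by fun_prop⟩ : C(K, F)))
      (fun _ _ _ => by ext; simp) (fun _ _ _ => by ext; simp)
      (fun _ _ _ => by ext; simp) (fun _ _ _ => by ext; simp)) 1 fun A u => by
    rw [one_mul]
    refine (ContinuousMap.norm_le _ (by positivity)).2 fun k => ?_
    exact (A k).le_of_opNorm_le_of_le (A.norm_coe_le_norm k) (u.norm_coe_le_norm k)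

lemma hasFDerivAt_continuousMap_comp {f : C(E, F)} {f' : C(E, E →L[ℝ] F)}
    (hf : ∀ x, HasFDerivAt f (f' x) x) (u : C(K, E)) :
    HasFDerivAt (fun v : C(K, E) => f.comp v) (pointwiseApply (f'.comp u)) u := by
  refine HasFDerivAt.of_isLittleO (Asymptotics.isLittleO_iff.2 fun ε hε => ?_)
  have hcont : Continuous fun v : C(K, E) => f'.comp v := ContinuousMap.continuous_postcomp f'
  obtain ⟨δ, hδ, hf'⟩ := continuousAt_iff (f := fun v : C(K, E) => f'.comp v) (a := u) |>.1
    hcont.continuousAt ε hε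
  filter_upwards [ball_mem_nhds u hδ] with v hv
  refine (ContinuousMap.norm_le _ (by positivity)).2 fun k => ?_
  have hbound : ∀ y ∈ segment ℝ (u k) (v k), ‖f' y - f' (u k)‖ ≤ ε := by
    rw [segment_eq_image_lineMap]
    rintro _ ⟨θ, hθ, rfl⟩
    have hw : dist (AffineMap.lineMap u v θ) u < δ := by
      rw [dist_lineMap_left, Real.norm_of_nonneg hθ.1, dist_comm]
      exact (mul_le_of_le_one_left dist_nonneg hθ.2).trans_lt hv
    simpa [dist_eq_norm, AffineMap.lineMap_apply] using
      ((ContinuousMap.dist_apply_le_dist k).trans_lt (hf' hw)).le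
  calc ‖f (v k) - f (u k) - f' (u k) (v k - u k)‖
      ≤ ε * ‖v k - u k‖ := (convex_segment _ _).norm_image_sub_le_of_norm_hasFDerivWithin_le'
        (fun y _ => (hf y).hasFDerivWithinAt) hbound (left_mem_segment ..) (right_mem_segment ..)
    _ ≤ ε * ‖v - u‖ := by gcongr; exact (v - u).norm_coe_le_norm k

lemma contDiff_nat_continuousMap_comp (n : ℕ) {F : Type u} [NormedAddCommGroup F] [NormedSpace ℝ F]
    {f : C(E, F)} (hf : ContDiff ℝ n f) : ContDiff ℝ n fun v : C(K, E) => f.comp v := by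
  induction n generalizing F with
  | zero => exact contDiff_zero.2 (ContinuousMap.continuous_postcomp f)
  | succ n ih =>
    push_cast at hf ⊢
    obtain ⟨f', hf', hff'⟩ := contDiff_succ_iff_hasFDerivAt.1 hf
    exact contDiff_succ_iff_hasFDerivAt.2 ⟨_, pointwiseApply.contDiff.comp
      (ih (f := ⟨f', hf'.continuous⟩) hf'), hasFDerivAt_continuousMap_comp hff'⟩

theorem contDiff_continuousMap_comp {n : ℕ∞} {f : C(E, F)} (hf : ContDiff ℝ n f) :
    ContDiff ℝ n fun v : C(K, E) => f.comp v :=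
  contDiff_iff_forall_nat_le.2 fun m hm =>
    contDiff_nat_continuousMap_comp m (hf.of_le (by exact_mod_cast hm))

end Superposition

section FixedPoint

variable {P B : Type*} [NormedAddCommGroup P] [NormedSpace ℝ P] [CompleteSpace P]
  [NormedAddCommGroup B] [NormedSpace ℝ B] [CompleteSpace B]

lemma isInvertible_one_sub_of_norm_lt_one {A : B →L[ℝ] B} (hA : ‖A‖ < 1) :
    (1 - A).IsInvertible :=
  ⟨ContinuousLinearEquiv.unitsEquiv ℝ B (Units.oneSub A hA), rfl⟩

theorem contDiffAt_of_forall_fixedPoint {n : WithTop ℕ∞} (hn : n ≠ 0) {N : P × B → B} {u : P → B}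
    {p₀ : P} {k : ℝ≥0} (hN : ContDiffAt ℝ n N (p₀, u p₀)) (hu : ∀ p, N (p, u p) = u p) (hk : k < 1)
    (hNk : ∀ᶠ p in 𝓝 p₀, LipschitzWith k fun x => N (p, x)) :
    ContDiffAt ℝ n u p₀ := by
  set q₀ : P × B := (p₀, u p₀)
  set A : B →L[ℝ] B := fderiv ℝ N q₀ ∘L .inr ℝ P B
  have hNd : HasFDerivAt N (fderiv ℝ N q₀) q₀ := (hN.differentiableAt hn).hasFDerivAt
  have hA : ‖A‖ < 1 :=
    ((hNd.comp (u p₀) (hasFDerivAt_prodMk_right p₀ (u p₀))).le_of_lipschitz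
      hNk.self_of_nhds).trans_lt (by exact_mod_cast hk)
  have hf : ContDiffAt ℝ n (fun q => q.2 - N q) q₀ := contDiffAt_snd.sub hN
  have hf' : fderiv ℝ (fun q => q.2 - N q) q₀ ∘L .inr ℝ P B = 1 - A := by
    rw [(hasFDerivAt_snd.fun_sub hNd).fderiv]
    rfl
  have hinv : (fderiv ℝ (fun q => q.2 - N q) q₀ ∘L .inr ℝ P B).IsInvertible :=
    hf' ▸ isInvertible_one_sub_of_norm_lt_one hA
  refine (hf.contDiffAt_implicitFunction hn hinv).congr_of_eventuallyEq ?_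
  filter_upwards [hf.eventually_apply_implicitFunction hn hinv, hNk] with p hp hpk
  refine ContractingWith.fixedPoint_unique' ⟨hk, hpk⟩ (hu p) (sub_eq_zero.1 (hp.trans ?_)).symm
  exact sub_eq_zero.2 (hu p₀).symm

end FixedPoint

section Primitive

variable {E : Type*} [NormedAddCommGroup E] [NormedSpace ℝ E]

/-- The constant path at `x`, as a continuous linear function of `x`. -/
def constPath : E →L[ℝ] C(unitInterval, E) where
  toFun := ContinuousMap.const unitInterval
  map_add' _ _ := rfl
  map_smul' _ _ := rfl
  cont := ContinuousMap.continuous_const'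

/-- The primitive vanishing at `0` of a path. Paths are extended to `ℝ` by their end values. -/
noncomputable def pathPrimitive : C(unitInterval, E) →L[ℝ] C(unitInterval, E) :=
  LinearMap.mkContinuous
    { toFun := fun u => ⟨fun s => ∫ σ in (0 : ℝ)..s, IccExtend zero_le_one u σ,
        (intervalIntegral.continuous_primitive
          (fun _ _ => u.continuous.Icc_extend'.intervalIntegrable _ _) 0).comp
          continuous_subtype_val⟩
      map_add' := fun u w => ContinuousMap.ext fun s => intervalIntegral.integral_add
        (u.continuous.Icc_extend'.intervalIntegrable _ _)
        (w.continuous.Icc_extend'.intervalIntegrable _ _)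
      map_smul' := fun c _ => ContinuousMap.ext fun s => intervalIntegral.integral_smul c _ } 1
    fun u => by
      refine (ContinuousMap.norm_le _ (by positivity)).2 fun s => ?_
      calc ‖∫ σ in (0 : ℝ)..s, IccExtend zero_le_one u σ‖ ≤ ‖u‖ * |(s : ℝ) - 0| :=
            intervalIntegral.norm_integral_le_of_norm_le_const fun σ _ => u.norm_coe_le_norm _
        _ ≤ 1 * ‖u‖ := by
            rw [sub_zero, abs_of_nonneg s.2.1, mul_comm]
            exact mul_le_mul_of_nonneg_right s.2.2 (norm_nonneg u)

lemma norm_pathPrimitive_le (u : C(unitInterval, E)) : ‖pathPrimitive u‖ ≤ ‖u‖ :=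
  (ContinuousLinearMap.le_of_opNorm_le _
    (LinearMap.mkContinuous_norm_le _ zero_le_one _) u).trans_eq (one_mul _)

lemma pathPrimitive_of_hasDerivAt [CompleteSpace E] {γ γ' : ℝ → E} (hγ : ∀ t, HasDerivAt γ (γ' t) t)
    (hγ' : Continuous γ') (s : unitInterval) :
    pathPrimitive ⟨fun s : unitInterval => γ' s, by fun_prop⟩ s = γ s - γ 0 := by
  rw [← intervalIntegral.integral_eq_sub_of_hasDerivAt (fun t _ => hγ t)
    (hγ'.intervalIntegrable _ _)]
  refine intervalIntegral.integral_congr fun σ hσ => ?_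
  rw [uIcc_of_le s.2.1] at hσ
  exact IccExtend_of_mem _ _ ⟨hσ.1, hσ.2.trans s.2.2⟩

end Primitive

section Flow

universe u

variable {E : Type u} [NormedAddCommGroup E] [NormedSpace ℝ E]

/-- `Φ` is a global flow of the autonomous vector field `f`. Mathlib's `Flow` records the group law
but no generating field. -/
structure IsFlowOf (Φ : ℝ → E → E) (f : E → E) : Prop where
  map_zero : ∀ x, Φ 0 x = x
  hasDerivAt : ∀ x t, HasDerivAt (fun t => Φ t x) (f (Φ t x)) t

lemma exists_hasDerivWithinAt_Icc_of_lipschitzWith [CompleteSpace E] {f : E → E} {k : ℝ≥0}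
    (hf : LipschitzWith k f) {ε : ℝ} (hε : 0 < ε) (hkε : k * ε ≤ 1 / 2) (x : E) :
    ∃ γ : ℝ → E, γ 0 = x ∧
      ∀ t ∈ Icc (-ε) ε, HasDerivWithinAt γ (f (γ t)) (Icc (-ε) ε) t := by
  set a : ℝ≥0 := ⟨2 * ε * ‖f x‖, by positivity⟩
  have hbound : ∀ y ∈ closedBall x a, ‖f y‖ ≤ ‖f x‖₊ + k * a := fun y hy =>
    calc ‖f y‖ ≤ ‖f x‖ + ‖f y - f x‖ := norm_le_norm_add_norm_sub' _ _
      _ ≤ ‖f x‖ + k * ‖y - x‖ := by gcongr; exact hf.norm_sub_le y x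
      _ ≤ ‖f x‖₊ + k * a := by gcongr; exacts [le_rfl, mem_closedBall_iff_norm.1 hy]
  have htime : (‖f x‖₊ + k * a : ℝ≥0) * max (ε - 0) (0 - -ε) ≤ (a : ℝ) - (0 : ℝ≥0) := by
    have : k * ε * (2 * ε * ‖f x‖) ≤ 1 / 2 * (2 * ε * ‖f x‖) := by gcongr
    have hacoe : (a : ℝ) = 2 * ε * ‖f x‖ := rfl
    simp only [NNReal.coe_add, NNReal.coe_mul, coe_nnnorm, sub_zero, zero_sub, neg_neg, max_self,
      NNReal.coe_zero, hacoe]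
    linarith
  exact (IsPicardLindelof.of_time_independent (t₀ := ⟨0, by simp [hε.le]⟩) hbound
    hf.lipschitzOnWith htime).exists_eq_forall_mem_Icc_hasDerivWithinAt₀

theorem exists_isFlowOf [CompleteSpace E] {f : E → E} {k : ℝ≥0} (hf : ContDiff ℝ 1 f)
    (hlip : LipschitzWith k f) : ∃ Φ, IsFlowOf Φ f := by
  obtain ⟨ε, hε, hkε⟩ : ∃ ε : ℝ, 0 < ε ∧ k * ε ≤ 1 / 2 := by
    refine ⟨1 / (2 * (k + 1)), by positivity, ?_⟩
    rw [mul_one_div, div_le_div_iff₀ (by positivity) two_pos]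
    linarith
  have hcurve := exists_isMIntegralCurve_of_isMIntegralCurveOn (I := modelWithCornersSelf ℝ E)
    (M := E) (v := f) (contMDiff_vectorSpace_iff_contDiff.2 hf) hε fun x => by
      obtain ⟨γ, hγ0, hγ⟩ := exists_hasDerivWithinAt_Icc_of_lipschitzWith hlip hε hkε x
      exact ⟨γ, hγ0, fun t ht => ((hγ t (Ioo_subset_Icc_self ht)).mono
        Ioo_subset_Icc_self).hasFDerivWithinAt.hasMFDerivWithinAt⟩
  choose γ hγ0 hγ using hcurve
  have hfderiv (x : E) (t : ℝ) :
      HasFDerivAt (γ x) ((1 : ℝ →L[ℝ] ℝ).smulRight (f (γ x t))) t :=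
    hasMFDerivAt_iff_hasFDerivAt.1 (hγ x t)
  exact ⟨fun t x => γ x t, hγ0, fun x t => by simpa using (hfderiv x t).hasDerivAt⟩

/-- The Picard operator, with time rescaled to the unit interval: its fixed point for the
parameters `(t, x)` is `s ↦ Φ (t * s) x`. -/
noncomputable def picardMap (f : C(E, E)) (q : (ℝ × E) × C(unitInterval, E)) : C(unitInterval, E) :=
  constPath q.1.2 + q.1.1 • pathPrimitive (f.comp q.2)

lemma contDiff_picardMap {n : ℕ∞} {f : C(E, E)} (hf : ContDiff ℝ n f) :
    ContDiff ℝ n (picardMap f) := by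
  have hcomp : ContDiff ℝ n fun q : (ℝ × E) × C(unitInterval, E) => f.comp q.2 :=
    (contDiff_continuousMap_comp hf).comp contDiff_snd
  unfold picardMap
  fun_prop

lemma lipschitzWith_picardMap {k : ℝ≥0} {f : C(E, E)} (hf : LipschitzWith k f) (p : ℝ × E) :
    LipschitzWith (‖p.1‖₊ * k) fun u => picardMap f (p, u) := by
  refine LipschitzWith.of_dist_le_mul fun u w => ?_
  have hcomp : ‖f.comp u - f.comp w‖ ≤ k * ‖u - w‖ :=
    (ContinuousMap.norm_le _ (by positivity)).2 fun s =>
      (hf.norm_sub_le _ _).trans (by gcongr; exact (u - w).norm_coe_le_norm s)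
  rw [picardMap, picardMap, dist_add_left, dist_eq_norm, dist_eq_norm, ← smul_sub, ← map_sub,
    norm_smul, NNReal.coe_mul, coe_nnnorm, mul_assoc]
  gcongr
  exact (norm_pathPrimitive_le _).trans hcomp

namespace IsFlowOf

variable {Φ : ℝ → E → E} {f : E → E} {k : ℝ≥0}

lemma continuous (hΦ : IsFlowOf Φ f) (x : E) : Continuous fun t => Φ t x :=
  continuous_iff_continuousAt.2 fun t => (hΦ.hasDerivAt x t).continuousAt

lemma map_add (hΦ : IsFlowOf Φ f) (hf : LipschitzWith k f) (s t : ℝ) (x : E) :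
    Φ (s + t) x = Φ s (Φ t x) :=
  congrFun (ODE_solution_unique_univ (v := fun _ => f) (s := fun _ => univ) (t₀ := 0)
    (f := fun s => Φ (s + t) x) (g := fun s => Φ s (Φ t x)) (fun _ => hf.lipschitzOnWith)
    (fun s => ⟨(hΦ.hasDerivAt x (s + t)).comp_add_const s t, trivial⟩)
    (fun s => ⟨hΦ.hasDerivAt _ s, trivial⟩) (by simp only [zero_add, hΦ.map_zero])) s

lemma fderiv_apply_one_zero (hΦ : IsFlowOf Φ f)
    (hsmooth : Differentiable ℝ fun p : ℝ × E => Φ p.1 p.2) (p : ℝ × E) :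
    fderiv ℝ (fun p : ℝ × E => Φ p.1 p.2) p (1, 0) = f (Φ p.1 p.2) := by
  have hline : HasDerivAt (fun t : ℝ => (t, p.2)) (1, 0) p.1 :=
    (hasDerivAt_id p.1).prodMk (hasDerivAt_const p.1 p.2)
  have hcomp := (hsmooth p).hasFDerivAt.comp_hasDerivAt p.1 hline
  exact hcomp.unique (hΦ.hasDerivAt p.2 p.1)

theorem hasDerivAt_fderiv (hΦ : IsFlowOf Φ f)
    (hsmooth : ContDiff ℝ 2 fun p : ℝ × E => Φ p.1 p.2) (hf : Differentiable ℝ f) (x w : E)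
    (t : ℝ) :
    HasDerivAt (fun t => fderiv ℝ (fun p : ℝ × E => Φ p.1 p.2) (t, x) (0, w))
      (fderiv ℝ f (Φ t x) (fderiv ℝ (fun p : ℝ × E => Φ p.1 p.2) (t, x) (0, w))) t := by
  set Ψ : ℝ × E → E := fun p => Φ p.1 p.2
  have hdiff : Differentiable ℝ Ψ := hsmooth.differentiable two_ne_zero
  have hΨ' : HasFDerivAt (fderiv ℝ Ψ) (fderiv ℝ (fderiv ℝ Ψ) (t, x)) (t, x) :=
    ((hsmooth.fderiv_right (m := 1) le_rfl).differentiable one_ne_zero _).hasFDerivAt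
  have hmixed : fderiv ℝ (fderiv ℝ Ψ) (t, x) (0, w) (1, 0)
      = fderiv ℝ f (Φ t x) (fderiv ℝ Ψ (t, x) (0, w)) := by
    have hleft := hΨ'.clm_apply (hasFDerivAt_const ((1, 0) : ℝ × E) (t, x))
    have hright : HasFDerivAt (fun p => fderiv ℝ Ψ p (1, 0)) _ (t, x) :=
      ((hf (Ψ (t, x))).hasFDerivAt.comp (t, x) (hdiff (t, x)).hasFDerivAt).congr_of_eventuallyEq
        (.of_forall (hΦ.fderiv_apply_one_zero hdiff))
    simpa using congrArg (fun A => A (0, w)) (hleft.unique hright)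
  have hsymm : IsSymmSndFDerivAt ℝ Ψ (t, x) := hsmooth.contDiffAt.isSymmSndFDerivAt (by simp)
  have hline : HasDerivAt (fun t : ℝ => (t, x)) (1, 0) t :=
    (hasDerivAt_id t).prodMk (hasDerivAt_const t x)
  have hderiv : HasDerivAt (fun t => fderiv ℝ Ψ (t, x)) _ t := hΨ'.comp_hasDerivAt t hline
  refine HasDerivAt.congr_deriv ?_ ((hsymm.eq (1, 0) (0, w)).trans hmixed)
  exact (ContinuousLinearMap.apply ℝ E ((0, w) : ℝ × E)).hasFDerivAt.comp_hasDerivAt t hderiv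

/-- The orbit of `p.2` up to time `p.1`, run over the unit interval. -/
def rescaledOrbit (hΦ : IsFlowOf Φ f) (p : ℝ × E) : C(unitInterval, E) where
  toFun s := Φ (p.1 * s) p.2
  continuous_toFun := (hΦ.continuous p.2).comp (by fun_prop)

variable [CompleteSpace E]

lemma picardMap_rescaledOrbit (hΦ : IsFlowOf Φ f) (hf : Continuous f) (p : ℝ × E) :
    picardMap ⟨f, hf⟩ (p, hΦ.rescaledOrbit p) = hΦ.rescaledOrbit p := by
  have hcont := hΦ.continuous p.2
  have hderiv (s : ℝ) : HasDerivAt (fun s => Φ (p.1 * s) p.2) (p.1 • f (Φ (p.1 * s) p.2)) s := by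
    simpa only [mul_one, Function.comp_def] using
      (hΦ.hasDerivAt p.2 (p.1 * s)).scomp s ((hasDerivAt_id' s).const_mul p.1)
  ext s
  have hprim : pathPrimitive (p.1 • (⟨fun s : unitInterval => f (Φ (p.1 * s) p.2), by fun_prop⟩ :
      C(unitInterval, E))) s = Φ (p.1 * s) p.2 - p.2 :=
    (pathPrimitive_of_hasDerivAt hderiv (by fun_prop) s).trans (by rw [mul_zero, hΦ.map_zero])
  rw [map_smul] at hprim
  exact (congrArg (p.2 + ·) hprim).trans (add_sub_cancel _ _)

lemma contDiffAt_of_norm_mul_lt_one {n : ℕ∞} (hn : n ≠ 0) (hΦ : IsFlowOf Φ f)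
    (hf : ContDiff ℝ n f) (hlip : LipschitzWith k f) {p : ℝ × E} (hp : ‖p.1‖₊ * k < 1) :
    ContDiffAt ℝ n (fun p : ℝ × E => Φ p.1 p.2) p := by
  obtain ⟨c, hpc, hc⟩ := exists_between hp
  have hpath := contDiffAt_of_forall_fixedPoint (n := n) (by exact_mod_cast hn)
    (contDiff_picardMap (f := ⟨f, hf.continuous⟩) hf).contDiffAt
    (hΦ.picardMap_rescaledOrbit hf.continuous) (p₀ := p) hc (by
      filter_upwards [(by fun_prop : ContinuousAt (fun q : ℝ × E => ‖q.1‖₊ * k) p).eventually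
        (gt_mem_nhds hpc)] with q hq
      exact (lipschitzWith_picardMap hlip q).weaken hq.le)
  simpa [rescaledOrbit, Function.comp_def] using
    (ContinuousMap.evalCLM ℝ (1 : unitInterval)).contDiff.contDiffAt.comp p hpath

theorem contDiff {n : ℕ∞} (hn : n ≠ 0) (hΦ : IsFlowOf Φ f) (hf : ContDiff ℝ n f)
    (hlip : LipschitzWith k f) : ContDiff ℝ n fun p : ℝ × E => Φ p.1 p.2 := by
  suffices h : ∀ (m : ℕ) (p : ℝ × E), ‖p.1‖₊ * k < 2 ^ m →
      ContDiffAt ℝ n (fun p : ℝ × E => Φ p.1 p.2) p from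
    contDiff_iff_contDiffAt.2 fun p =>
      (pow_unbounded_of_one_lt (‖p.1‖₊ * k) one_lt_two).elim fun m => h m p
  intro m
  induction m with
  | zero => exact fun p hp => hΦ.contDiffAt_of_norm_mul_lt_one hn hf hlip (by simpa using hp)
  | succ m ih =>
    intro p hp
    have hhalf (y : E) : ContDiffAt ℝ n (fun p : ℝ × E => Φ p.1 p.2) (p.1 / 2, y) := by
      refine ih _ ?_
      rw [pow_succ] at hp
      rw [nnnorm_div, div_mul_eq_mul_div, div_lt_iff₀ (by simp)]
      simpa using hp
    have hdouble : (fun p : ℝ × E => Φ p.1 p.2) = fun p => Φ (p.1 / 2) (Φ (p.1 / 2) p.2) := by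
      funext p
      rw [← hΦ.map_add hlip, add_halves]
    rw [hdouble]
    have hstep : ContDiffAt ℝ n (fun q : ℝ × E => Φ (q.1 / 2) q.2) p :=
      (hhalf p.2).comp p ((contDiffAt_fst.div_const 2).prodMk contDiffAt_snd)
    exact (hhalf _).comp p ((contDiffAt_fst.div_const 2).prodMk hstep)

end IsFlowOf

end Flow

section Calculus

variable {f f' : ℝ → ℝ} {a b : ℝ}

lemma monotoneOn_Icc_of_hasDerivAt_nonneg (hf : ∀ t ∈ Icc a b, HasDerivAt f (f' t) t)
    (hf' : ∀ t ∈ Icc a b, 0 ≤ f' t) : MonotoneOn f (Icc a b) :=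
  monotoneOn_of_hasDerivWithinAt_nonneg (convex_Icc a b) (HasDerivAt.continuousOn hf)
    (fun t ht => (hf t (interior_subset ht)).hasDerivWithinAt)
    fun t ht => hf' t (interior_subset ht)

lemma strictMonoOn_Icc_of_hasDerivAt_pos (hf : ∀ t ∈ Icc a b, HasDerivAt f (f' t) t)
    (hf' : ∀ t ∈ Icc a b, 0 < f' t) : StrictMonoOn f (Icc a b) :=
  strictMonoOn_of_hasDerivWithinAt_pos (convex_Icc a b) (HasDerivAt.continuousOn hf)
    (fun t ht => (hf t (interior_subset ht)).hasDerivWithinAt)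
    fun t ht => hf' t (interior_subset ht)

lemma eq_left_of_hasDerivAt_zero (hf : ∀ t ∈ Icc a b, HasDerivAt f 0 t) :
    ∀ t ∈ Icc a b, f t = f a :=
  constant_of_has_deriv_right_zero (HasDerivAt.continuousOn hf)
    fun t ht => (hf t (Ico_subset_Icc_self ht)).hasDerivWithinAt

lemma pos_of_forall_ne_of_pos_left (hf : ContinuousOn f (Icc a b)) (hne : ∀ t ∈ Icc a b, f t ≠ 0)
    (ha : 0 < f a) {t : ℝ} (ht : t ∈ Icc a b) : 0 < f t := by
  by_contra! hneg
  have hsub : Icc a t ⊆ Icc a b := Icc_subset_Icc_right ht.2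
  obtain ⟨s, hs, hzero⟩ := intermediate_value_Icc' ht.1 (hf.mono hsub) ⟨hneg, ha.le⟩
  exact hne s (hsub hs) hzero

lemma exists_first_hitting_time {c : ℝ} (hab : a ≤ b) (hf : ContinuousOn f (Icc a b))
    (ha : f a < c) (hb : c ≤ f b) : ∃ τ ∈ Ioc a b, f τ = c ∧ ∀ t ∈ Icc a τ, f t ≤ c := by
  have hcompact : IsCompact (Icc a b ∩ f ⁻¹' {c}) :=
    isCompact_Icc.of_isClosed_subset
      (hf.preimage_isClosed_of_isClosed isClosed_Icc isClosed_singleton) inter_subset_left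
  obtain ⟨s, hs, hsc⟩ := intermediate_value_Icc hab hf ⟨ha.le, hb⟩
  obtain ⟨τ, ⟨hτ, hτc⟩, hfirst⟩ := hcompact.exists_isLeast ⟨s, hs, hsc⟩
  refine ⟨τ, ⟨hτ.1.lt_of_ne fun h => ha.ne (h ▸ hτc), hτ.2⟩, hτc, fun t ht => ?_⟩
  by_contra! hlt
  have hsub : Icc a t ⊆ Icc a b := Icc_subset_Icc_right (ht.2.trans hτ.2)
  obtain ⟨r, hr, hrc⟩ := intermediate_value_Icc ht.1 (hf.mono hsub) ⟨ha.le, hlt.le⟩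
  have hrt : r ≠ t := fun h => hlt.ne' (h ▸ hrc)
  exact (hfirst ⟨hsub hr, hrc⟩).not_gt ((hr.2.lt_of_ne hrt).trans_le ht.2)

lemma nonneg_of_hasDerivAt_of_forall_left_le {c : ℝ} (hab : a < b) (hf : HasDerivAt f c a)
    (hmin : ∀ t ∈ Icc a b, f a ≤ f t) : 0 ≤ c := by
  refine ge_of_tendsto (hf.tendsto_slope.mono_left (nhdsGT_le_nhdsNE a)) ?_
  filter_upwards [Ioo_mem_nhdsGT hab] with t ht
  rw [slope_def_field]
  exact div_nonneg (sub_nonneg.2 (hmin t (Ioo_subset_Icc_self ht))) (sub_nonneg.2 ht.1.le)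

theorem exists_contDiffAt_implicit_of_deriv_ne_zero {P : Type*} [NormedAddCommGroup P]
    [NormedSpace ℝ P] [CompleteSpace P] {n : WithTop ℕ∞} (hn : n ≠ 0) {F : P × ℝ → ℝ} {p₀ : P}
    {v₀ c : ℝ} (hF : ContDiffAt ℝ n F (p₀, v₀)) (hderiv : HasDerivAt (fun v => F (p₀, v)) c v₀)
    (hc : c ≠ 0) :
    ∃ g : P → ℝ, ContDiffAt ℝ n g p₀ ∧ g p₀ = v₀ ∧ ∀ᶠ p in 𝓝 p₀, F (p, g p) = F (p₀, v₀) := by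
  have hpartial : HasDerivAt (fun v => F (p₀, v)) ((fderiv ℝ F (p₀, v₀) ∘L .inr ℝ P ℝ) 1) v₀ :=
    ((hF.differentiableAt hn).hasFDerivAt.comp v₀ (hasFDerivAt_prodMk_right p₀ v₀)).hasDerivAt
  have hinv : (fderiv ℝ F (p₀, v₀) ∘L .inr ℝ P ℝ).IsInvertible := by
    refine ⟨ContinuousLinearEquiv.unitsEquivAut ℝ (Units.mk0 c hc), ?_⟩
    ext
    simpa using hderiv.unique hpartial
  exact ⟨hF.implicitFunction hn hinv, hF.contDiffAt_implicitFunction hn hinv,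
    hF.implicitFunction_apply_self hn hinv, hF.eventually_apply_implicitFunction hn hinv⟩

end Calculus

namespace Pendulum

open Real

/-- The mechanical energy of the state with angle `x` and velocity `y`. The potential is normalized
to vanish at the unstable equilibrium `π`. -/
noncomputable def energy (x y : ℝ) : ℝ := y ^ 2 / 2 + (-cos x - 1)

/-- The linearization `J̈ + cos x J = 0` of the pendulum equation along `x`, with `L = J̇`. -/
def IsJacobiFieldOn (x J L : ℝ → ℝ) (s : Set ℝ) : Prop :=
  ∀ t ∈ s, HasDerivAt J (L t) t ∧ HasDerivAt L (-cos (x t) * J t) t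

lemma pi_div_two_le_two_mul_cos_add_mul_sin {x : ℝ} (hx : |x| ≤ π / 2) :
    π / 2 ≤ 2 * cos x + x * sin x := by
  have hderiv (t : ℝ) :
      HasDerivAt (fun t => 2 * cos t + t * sin t) (t * cos t - sin t) t :=
    (((hasDerivAt_cos t).const_mul 2).add ((hasDerivAt_id' t).mul (hasDerivAt_sin t))).congr_deriv
      (by ring)
  have hanti : AntitoneOn (fun t => 2 * cos t + t * sin t) (Icc 0 (π / 2)) := by
    refine antitoneOn_of_hasDerivWithinAt_nonpos (convex_Icc _ _)
      (HasDerivAt.continuousOn fun t _ => hderiv t) (fun t _ => (hderiv t).hasDerivWithinAt) ?_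
    rw [interior_Icc]
    intro t ht
    have hcos : 0 < cos t := cos_pos_of_mem_Ioo ⟨by linarith [ht.1, pi_pos], ht.2⟩
    have htan := le_tan ht.1.le ht.2
    rw [tan_eq_sin_div_cos, le_div_iff₀ hcos] at htan
    linarith
  have hend := hanti ⟨abs_nonneg x, hx⟩ ⟨by positivity, le_rfl⟩ hx
  have heven : |x| * sin |x| = x * sin x := by
    rcases abs_cases x with ⟨h, -⟩ | ⟨h, -⟩ <;> simp [h]
  simpa [heven] using hend

section Solution

variable {x y J L : ℝ → ℝ} {a b : ℝ}

lemma continuousOn_angle {s : Set ℝ} (h : IsPendSolOn x y s) : ContinuousOn x s :=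
  HasDerivAt.continuousOn fun t ht => (h t ht).1

lemma continuousOn_velocity {s : Set ℝ} (h : IsPendSolOn x y s) : ContinuousOn y s :=
  HasDerivAt.continuousOn fun t ht => (h t ht).2

lemma energy_eq_left (h : IsPendSolOn x y (Icc a b)) :
    ∀ t ∈ Icc a b, energy (x t) (y t) = energy (x a) (y a) := by
  refine eq_left_of_hasDerivAt_zero fun t ht => ?_
  have hpot := ((h t ht).1.cos.neg).sub_const 1
  refine ((((h t ht).2.pow 2).div_const 2).add hpot).congr_deriv ?_
  ring

lemma sq_velocity_eq (h : IsPendSolOn x y (Icc a b)) {t : ℝ} (ht : t ∈ Icc a b) :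
    y t ^ 2 = 2 * (energy (x a) (y a) + 1) + 2 * cos (x t) := by
  rw [← energy_eq_left h t ht, energy]
  ring

lemma cos_eq_of_isLocalMin (h : IsPendSolOn x y (Icc a b)) {c : ℝ} (hc : c ∈ Icc a b)
    (hmin : IsLocalMin x c) : cos (x c) = -(energy (x a) (y a) + 1) := by
  have hsq := sq_velocity_eq h hc
  rw [hmin.hasDerivAt_eq_zero (h c hc).1] at hsq
  linarith

lemma wronskian_eq_left (h : IsPendSolOn x y (Icc a b)) (hJ : IsJacobiFieldOn x J L (Icc a b)) :
    ∀ t ∈ Icc a b, L t * y t + J t * sin (x t) = L a * y a + J a * sin (x a) := by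
  refine eq_left_of_hasDerivAt_zero fun t ht => ?_
  refine (((hJ t ht).2.mul (h t ht).2).add ((hJ t ht).1.mul (h t ht).1.sin)).congr_deriv ?_
  ring

lemma lt_pi_of_energy_neg (h : IsPendSolOn x y (Icc a b)) (hneg : energy (x a) (y a) < 0)
    (ha : x a < π) {t : ℝ} (ht : t ∈ Icc a b) : x t < π := by
  by_contra! hge
  have hsub : Icc a t ⊆ Icc a b := Icc_subset_Icc_right ht.2
  obtain ⟨s, hs, hπ⟩ :=
    intermediate_value_Icc ht.1 ((continuousOn_angle h).mono hsub) ⟨ha.le, hge⟩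
  have hsq := sq_velocity_eq h (hsub hs)
  rw [hπ, cos_pi] at hsq
  nlinarith [sq_nonneg (y s)]

end Solution

section JacobiField

variable {x y J L : ℝ → ℝ} {a b : ℝ} (h : IsPendSolOn x y (Icc a b))
  (hJ : IsJacobiFieldOn x J L (Icc a b)) (hJa : J a = 0) (hLa : L a = 1)

include h hJ hJa hLa

lemma normalized_wronskian_eq {t : ℝ} (ht : t ∈ Icc a b) : L t * y t + J t * sin (x t) = y a := by
  simpa [hJa, hLa] using wronskian_eq_left h hJ t ht

lemma hasDerivAt_div_velocity (m : ℝ) {t : ℝ} (ht : t ∈ Icc a b) (hyt : y t ≠ 0) :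
    HasDerivAt (fun t => (y a * x t - m * J t) / y t)
      (y a * (y t ^ 2 + x t * sin (x t) - m) / y t ^ 2) t := by
  have hnum := ((h t ht).1.const_mul (y a)).sub ((hJ t ht).1.const_mul m)
  refine (hnum.div (h t ht).2 hyt).congr_deriv ?_
  congr 1
  simp only [Pi.sub_apply]
  linear_combination -m * normalized_wronskian_eq h hJ hJa hLa ht

lemma jacobi_pos_of_velocity_pos (hab : a < b) (hy : ∀ t ∈ Icc a b, 0 < y t) : 0 < J b := by
  have ha : a ∈ Icc a b := left_mem_Icc.2 hab.le
  have hb : b ∈ Icc a b := right_mem_Icc.2 hab.le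
  have hmono : StrictMonoOn (fun t => J t / y t) (Icc a b) := by
    refine strictMonoOn_Icc_of_hasDerivAt_pos (f' := fun t => y a / y t ^ 2)
      (fun t ht => ?_) fun t ht => div_pos (hy a ha) (pow_pos (hy t ht) 2)
    refine ((hJ t ht).1.div (h t ht).2 (hy t ht).ne').congr_deriv ?_
    rw [← normalized_wronskian_eq h hJ hJa hLa ht]
    ring
  have hquot := hmono ha hb hab
  simp only [hJa, zero_div] at hquot
  exact (div_pos_iff_of_pos_right (hy b hb)).1 hquot

lemma velocity_pos_of_energy_nonneg (hya : 0 < y a) (hE : 0 ≤ energy (x a) (y a)) {t : ℝ}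
    (ht : t ∈ Icc a b) : 0 < y t := by
  refine pos_of_forall_ne_of_pos_left (continuousOn_velocity h) (fun s hs hys => ?_) hya ht
  have hsq := sq_velocity_eq h hs
  have hcos : cos (x s) = -1 := by nlinarith [neg_one_le_cos (x s)]
  have hsin : sin (x s) = 0 := by nlinarith [sin_sq_add_cos_sq (x s)]
  have hw := normalized_wronskian_eq h hJ hJa hLa hs
  rw [hys, hsin, mul_zero, mul_zero, add_zero] at hw
  exact hya.ne hw

lemma velocity_mul_angle_le_jacobi (hy : ∀ t ∈ Icc a b, 0 < y t) (hx : ∀ t ∈ Icc a b, |x t| ≤ π / 2)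
    {t : ℝ} (ht : t ∈ Icc a b) :
    (2 * (energy (x a) (y a) + 1) + π / 2) * J t ≤ y a * x t - x a * y t := by
  set m := 2 * (energy (x a) (y a) + 1) + π / 2 with hm
  have ha : a ∈ Icc a b := left_mem_Icc.2 (ht.1.trans ht.2)
  have hmono : MonotoneOn (fun t => (y a * x t - m * J t) / y t) (Icc a b) := by
    refine monotoneOn_Icc_of_hasDerivAt_nonneg
      (fun t ht => hasDerivAt_div_velocity h hJ hJa hLa m ht (hy t ht).ne') fun t ht => ?_
    have hsq := sq_velocity_eq h ht
    have hineq := pi_div_two_le_two_mul_cos_add_mul_sin (hx t ht)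
    exact div_nonneg (mul_nonneg (hy a ha).le (by linarith)) (sq_nonneg _)
  have hquot := hmono ha ht ht.1
  simp only [hJa, mul_zero, sub_zero, mul_div_cancel_left₀ _ (hy a ha).ne'] at hquot
  rw [le_div_iff₀ (hy t ht)] at hquot
  linarith

lemma jacobi_pos_and_deriv_pos_at_pi_div_two (hab : a < b) (hE : -1 / 2 ≤ energy (x a) (y a))
    (ha : x a ∈ Ico (-1) (π / 2)) (hya : 0 < y a) (hx : ∀ t ∈ Icc a b, x t ∈ Icc (-1) (π / 2))
    (hb : x b = π / 2) : 0 < J b ∧ 0 < L b := by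
  have hbmem : b ∈ Icc a b := right_mem_Icc.2 hab.le
  have habs (t : ℝ) (ht : t ∈ Icc a b) : |x t| ≤ π / 2 :=
    abs_le.2 ⟨by linarith [(hx t ht).1, pi_gt_three], (hx t ht).2⟩
  have hy (t : ℝ) (ht : t ∈ Icc a b) : 0 < y t := by
    refine pos_of_forall_ne_of_pos_left (continuousOn_velocity h) (fun s hs hys => ?_) hya ht
    have hsq := sq_velocity_eq h hs
    have hcos := cos_nonneg_of_mem_Icc (abs_le.1 (habs s hs))
    rw [hys] at hsq
    linarith
  have hyb : 0 < y b := hy b hbmem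
  have hslow : y b < y a := by
    have hsq := sq_velocity_eq h hbmem
    rw [hb, cos_pi_div_two] at hsq
    have hcos : 0 < cos (x a) := cos_pos_of_mem_Ioo ⟨by linarith [ha.1, pi_gt_three], ha.2⟩
    have hsqa := sq_velocity_eq h (left_mem_Icc.2 hab.le)
    exact lt_of_pow_lt_pow_left₀ 2 hya.le (by linarith)
  have hJb : J b < y a := by
    have hbound := velocity_mul_angle_le_jacobi h hJ hJa hLa hy habs hbmem
    rw [hb] at hbound
    nlinarith [ha.1, pi_gt_three]
  refine ⟨jacobi_pos_of_velocity_pos h hJ hJa hLa hab hy, ?_⟩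
  have hw := normalized_wronskian_eq h hJ hJa hLa hbmem
  rw [hb, sin_pi_div_two, mul_one] at hw
  exact pos_of_mul_pos_left (by linarith) hyb.le

end JacobiField

lemma jacobi_pos_of_cos_nonpos {x J L : ℝ → ℝ} {a b : ℝ} (hJ : IsJacobiFieldOn x J L (Icc a b))
    (hx : ∀ t ∈ Icc a b, cos (x t) ≤ 0) (hJa : 0 < J a) (hLa : 0 < L a) {t : ℝ}
    (ht : t ∈ Icc a b) : 0 < J t := by
  have hmono : MonotoneOn (fun t => J t * L t) (Icc a b) := by
    refine monotoneOn_Icc_of_hasDerivAt_nonneg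
      (fun t ht => (hJ t ht).1.mul (hJ t ht).2) fun t ht => ?_
    nlinarith [mul_nonneg (neg_nonneg.2 (hx t ht)) (sq_nonneg (J t)), sq_nonneg (L t)]
  refine pos_of_forall_ne_of_pos_left (HasDerivAt.continuousOn fun t ht => (hJ t ht).1)
    (fun s hs hJs => ?_) hJa ht
  have hprod := hmono (left_mem_Icc.2 (hs.1.trans hs.2)) hs hs.1
  simp only [hJs, zero_mul] at hprod
  exact hprod.not_gt (mul_pos hJa hLa)

/-- A solution arc that starts in the lower region `[-1, π / 2)`, never returns below its starting
angle and reaches the upper region `[2π / 3, ∞)`. The threshold `2π / 3` forces the energy to be at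
least `-1 / 2`. -/
structure IsConfinedArc (x y : ℝ → ℝ) (a b : ℝ) : Prop where
  sol : IsPendSolOn x y (Icc a b)
  lt : a < b
  start : x a ∈ Ico (-1) (π / 2)
  velocity_nonneg : 0 ≤ y a
  confined : ∀ t ∈ Icc a b, x a ≤ x t
  finish : 2 * π / 3 ≤ x b

namespace IsConfinedArc

variable {x y J L : ℝ → ℝ} {a b : ℝ} (h : IsConfinedArc x y a b)

include h

lemma cos_start_pos : 0 < cos (x a) :=
  cos_pos_of_mem_Ioo ⟨by linarith [h.start.1, pi_gt_three], h.start.2⟩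

lemma neg_half_le_energy : -1 / 2 ≤ energy (x a) (y a) := by
  obtain ⟨s, hs, hxs⟩ := intermediate_value_Icc h.lt.le (continuousOn_angle h.sol)
    ⟨by linarith [h.start.2, pi_pos], h.finish⟩
  have hsq := sq_velocity_eq h.sol hs
  have hcos : cos (2 * π / 3) = -1 / 2 := by
    rw [show 2 * π / 3 = π - π / 3 by ring, cos_pi_sub, cos_pi_div_three]
    norm_num
  rw [hxs, hcos] at hsq
  linarith [sq_nonneg (y s)]

lemma velocity_start_pos : 0 < y a := by
  refine h.velocity_nonneg.lt_of_ne' fun hya => ?_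
  have hE := h.neg_half_le_energy
  rw [hya, energy] at hE
  linarith [h.cos_start_pos]

lemma cos_neg_of_isLocalMin {c : ℝ} (hc : c ∈ Icc a b) (hmin : IsLocalMin x c) :
    cos (x c) < 0 := by
  linarith [cos_eq_of_isLocalMin h.sol hc hmin, h.neg_half_le_energy]

lemma start_lt {t : ℝ} (ht : t ∈ Ioc a b) : x a < x t := by
  refine (h.confined t (Ioc_subset_Icc_self ht)).lt_of_ne fun heq => ?_
  rcases ht.2.eq_or_lt with rfl | htb
  · linarith [h.start.2, h.finish, pi_pos]
  · have hmin : IsLocalMin x t := by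
      filter_upwards [Icc_mem_nhds ht.1 htb] with s hs
      exact heq ▸ h.confined s hs
    exact (h.cos_neg_of_isLocalMin (Ioc_subset_Icc_self ht) hmin).not_gt (heq ▸ h.cos_start_pos)

lemma pi_div_two_le_of_le {τ : ℝ} (hτ : τ ∈ Ioc a b) (hxτ : x τ = π / 2) {t : ℝ}
    (ht : t ∈ Icc τ b) : π / 2 ≤ x t := by
  have hsub : Icc τ b ⊆ Icc a b := Icc_subset_Icc_left hτ.1.le
  obtain ⟨c, hc, hmin⟩ := isCompact_Icc.exists_isMinOn (nonempty_Icc.2 hτ.2)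
    ((continuousOn_angle h.sol).mono hsub)
  refine le_trans ?_ (hmin ht)
  by_contra! hlow
  have hτc : τ < c := hc.1.lt_of_ne (by rintro rfl; exact hlow.ne hxτ)
  have hcb : c < b := hc.2.lt_of_ne (by rintro rfl; linarith [h.finish, pi_pos])
  have hcos := h.cos_neg_of_isLocalMin (hsub hc) (hmin.isLocalMin (Icc_mem_nhds hτc hcb))
  have hlower : -(π / 2) < x c := by linarith [h.confined c (hsub hc), h.start.1, pi_gt_three]
  exact hcos.not_gt (cos_pos_of_mem_Ioo ⟨hlower, hlow⟩)

theorem jacobi_pos (hJ : IsJacobiFieldOn x J L (Icc a b)) (hJa : J a = 0) (hLa : L a = 1) :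
    0 < J b := by
  have hya := h.velocity_start_pos
  rcases le_or_gt 0 (energy (x a) (y a)) with hE | hE
  · exact jacobi_pos_of_velocity_pos h.sol hJ hJa hLa h.lt fun t ht =>
      velocity_pos_of_energy_nonneg h.sol hJ hJa hLa hya hE ht
  obtain ⟨τ, hτ, hxτ, hfirst⟩ := exists_first_hitting_time h.lt.le (continuousOn_angle h.sol)
    h.start.2 (by linarith [h.finish, pi_pos])
  have hpre : Icc a τ ⊆ Icc a b := Icc_subset_Icc_right hτ.2
  have hpost : Icc τ b ⊆ Icc a b := Icc_subset_Icc_left hτ.1.le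
  obtain ⟨hJτ, hLτ⟩ := jacobi_pos_and_deriv_pos_at_pi_div_two (fun t ht => h.sol t (hpre ht))
    (fun t ht => hJ t (hpre ht)) hJa hLa hτ.1 h.neg_half_le_energy h.start hya
    (fun t ht => ⟨h.start.1.trans (h.confined t (hpre ht)), hfirst t ht⟩) hxτ
  refine jacobi_pos_of_cos_nonpos (fun t ht => hJ t (hpost ht)) (fun t ht => ?_) hJτ hLτ
    (right_mem_Icc.2 hτ.2)
  have hlt := lt_pi_of_energy_neg h.sol hE (by linarith [h.start.2, pi_pos]) (hpost ht)
  exact cos_nonpos_of_pi_div_two_le_of_le (h.pi_div_two_le_of_le hτ hxτ ht)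
    (by linarith [pi_pos])

lemma le_max_pi (hJ : IsJacobiFieldOn x J L (Icc a b)) (hJa : J a = 0) (hLa : L a = 1) {t : ℝ}
    (ht : t ∈ Icc a b) : x t ≤ max (x b) π := by
  rcases le_or_gt 0 (energy (x a) (y a)) with hE | hE
  · refine le_max_of_le_left ?_
    refine (monotoneOn_Icc_of_hasDerivAt_nonneg (fun t ht => (h.sol t ht).1) fun t ht => ?_) ht
      (right_mem_Icc.2 h.lt.le) ht.2
    exact (velocity_pos_of_energy_nonneg h.sol hJ hJa hLa h.velocity_start_pos hE ht).le
  · exact le_max_of_le_right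
      (lt_pi_of_energy_neg h.sol hE (by linarith [h.start.2, pi_pos]) ht).le

end IsConfinedArc

section PhaseFlow

/-- The pendulum equation as a first-order vector field on the phase plane. -/
noncomputable def field (p : ℝ × ℝ) : ℝ × ℝ := (p.2, -sin p.1)

lemma contDiff_field {n : WithTop ℕ∞} : ContDiff ℝ n field := by
  unfold field
  fun_prop

lemma lipschitzWith_field : LipschitzWith 1 field := by
  have hsin : LipschitzWith 1 fun p : ℝ × ℝ => sin p.1 := by
    simpa [Function.comp_def] using
      lipschitzWith_sin.comp (LipschitzWith.prod_fst (α := ℝ) (β := ℝ))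
  exact (LipschitzWith.prod_snd.prodMk hsin.neg).weaken (max_self 1).le

lemma fderiv_field_apply (p w : ℝ × ℝ) : fderiv ℝ field p w = (w.2, -cos p.1 * w.1) := by
  have hsin : HasFDerivAt (fun p : ℝ × ℝ => -sin p.1)
      (-(cos p.1 • ContinuousLinearMap.fst ℝ ℝ ℝ)) p := hasFDerivAt_fst.sin.neg
  have hfield : HasFDerivAt field _ p := hasFDerivAt_snd.prodMk hsin
  rw [hfield.fderiv]
  simp

/-- The flow of the pendulum equation on the phase plane. -/
noncomputable def flow : ℝ → ℝ × ℝ → ℝ × ℝ :=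
  (exists_isFlowOf contDiff_field lipschitzWith_field).choose

lemma isFlowOf_flow : IsFlowOf flow field :=
  (exists_isFlowOf contDiff_field lipschitzWith_field).choose_spec

lemma contDiff_flow : ContDiff ℝ ∞ fun p : ℝ × ℝ × ℝ => flow p.1 p.2 :=
  isFlowOf_flow.contDiff (n := ⊤) (by simp) contDiff_field lipschitzWith_field

/-- The angle at time `t` of the solution with initial angle `α` and initial velocity `v`. -/
noncomputable def angle (t α v : ℝ) : ℝ := (flow t (α, v)).1

/-- The velocity at time `t` of the solution with initial angle `α` and initial velocity `v`. -/
noncomputable def velocity (t α v : ℝ) : ℝ := (flow t (α, v)).2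

/-- The derivative of the state at time `t` with respect to the initial velocity. -/
noncomputable def shootingVariation (t α v : ℝ) : ℝ × ℝ :=
  fderiv ℝ (fun p : ℝ × ℝ × ℝ => flow p.1 p.2) (t, α, v) (0, 0, 1)

@[simp]
lemma angle_zero (α v : ℝ) : angle 0 α v = α := by
  rw [angle, isFlowOf_flow.map_zero]

@[simp]
lemma velocity_zero (α v : ℝ) : velocity 0 α v = v := by
  rw [velocity, isFlowOf_flow.map_zero]

lemma contDiff_angle : ContDiff ℝ ∞ fun p : ℝ × ℝ × ℝ => angle p.1 p.2.1 p.2.2 :=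
  contDiff_flow.fst

lemma continuous_velocity : Continuous fun p : ℝ × ℝ × ℝ => velocity p.1 p.2.1 p.2.2 :=
  contDiff_flow.continuous.snd

lemma isPendSolOn_angle (α v : ℝ) (s : Set ℝ) :
    IsPendSolOn (fun t => angle t α v) (fun t => velocity t α v) s := fun t _ =>
  ⟨(isFlowOf_flow.hasDerivAt (α, v) t).fst, (isFlowOf_flow.hasDerivAt (α, v) t).snd⟩

lemma eqOn_angle {x y : ℝ → ℝ} {T : ℝ} (h : IsPendSolOn x y (Icc 0 T)) :
    EqOn x (fun t => angle t (x 0) (y 0)) (Icc 0 T) := by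
  have hsol (t : ℝ) (ht : t ∈ Icc 0 T) :
      HasDerivAt (fun t => (x t, y t)) (field (x t, y t)) t := (h t ht).1.prodMk (h t ht).2
  have heq := ODE_solution_unique (v := fun _ => field) (fun _ => lipschitzWith_field)
    (HasDerivAt.continuousOn hsol)
    (fun t ht => (hsol t (Ico_subset_Icc_self ht)).hasDerivWithinAt)
    (isFlowOf_flow.continuous (x 0, y 0)).continuousOn
    (fun t _ => (isFlowOf_flow.hasDerivAt _ t).hasDerivWithinAt) (isFlowOf_flow.map_zero _).symm
  exact fun t ht => congrArg Prod.fst (heq ht)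

lemma hasDerivAt_flow_initial_velocity (t α v : ℝ) :
    HasDerivAt (fun v => flow t (α, v)) (shootingVariation t α v) v := by
  have hline : HasDerivAt (fun v : ℝ => (t, α, v)) (0, 0, 1) v :=
    (hasDerivAt_const v t).prodMk ((hasDerivAt_const v α).prodMk (hasDerivAt_id' v))
  have hdiff := (contDiff_flow.differentiable (by simp) (t, α, v)).hasFDerivAt
  exact hdiff.comp_hasDerivAt v hline

lemma shootingVariation_zero (α v : ℝ) : shootingVariation 0 α v = (0, 1) := by
  have hstart : HasDerivAt (fun v => flow 0 (α, v)) (0, 1) v := by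
    simpa only [isFlowOf_flow.map_zero] using (hasDerivAt_const v α).prodMk (hasDerivAt_id' v)
  exact (hasDerivAt_flow_initial_velocity 0 α v).unique hstart

lemma isJacobiFieldOn_shootingVariation (α v : ℝ) (s : Set ℝ) :
    IsJacobiFieldOn (fun t => angle t α v) (fun t => (shootingVariation t α v).1)
      (fun t => (shootingVariation t α v).2) s := by
  intro t _
  have hvar := isFlowOf_flow.hasDerivAt_fderiv (contDiff_infty.1 contDiff_flow 2)
    (contDiff_field.differentiable one_ne_zero) (α, v) (0, 1) t
  rw [fderiv_field_apply] at hvar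
  exact ⟨hvar.fst, hvar.snd⟩

lemma hasDerivAt_angle_initial_velocity (t α v : ℝ) :
    HasDerivAt (fun v => angle t α v) (shootingVariation t α v).1 v :=
  (hasDerivAt_flow_initial_velocity t α v).fst

lemma le_angle {t : ℝ} (ht : 0 ≤ t) (α v : ℝ) : α + v * t - t ^ 2 / 2 ≤ angle t α v := by
  have hmono : MonotoneOn (fun t => velocity t α v + t) (Icc 0 t) := by
    refine monotoneOn_Icc_of_hasDerivAt_nonneg
      (fun s hs => ((isPendSolOn_angle α v _ s hs).2.add (hasDerivAt_id' s))) fun s _ => ?_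
    linarith [sin_le_one (angle s α v)]
  have hvel (s : ℝ) (hs : s ∈ Icc 0 t) : v ≤ velocity s α v + s := by
    simpa using hmono (left_mem_Icc.2 ht) hs hs.1
  have hmono' : MonotoneOn (fun s => angle s α v - (v * s - s ^ 2 / 2)) (Icc 0 t) := by
    refine monotoneOn_Icc_of_hasDerivAt_nonneg (f' := fun s => velocity s α v - (v - s))
      (fun s hs => (isPendSolOn_angle α v _ s hs).1.sub ?_) fun s hs => by linarith [hvel s hs]
    exact (((hasDerivAt_id' s).const_mul v).sub ((hasDerivAt_pow 2 s).div_const 2)).congr_deriv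
      (by norm_num)
  have hend : angle 0 α v - (v * 0 - 0 ^ 2 / 2) ≤ angle t α v - (v * t - t ^ 2 / 2) :=
    hmono' (left_mem_Icc.2 ht) (right_mem_Icc.2 ht) ht
  rw [angle_zero] at hend
  linarith

end PhaseFlow

section Confinement

/-- The mean velocity `(angle t α v - α) / t` over the time interval between `0` and `t`, extended
smoothly to `t = 0`. -/
noncomputable def meanVelocity (t α v : ℝ) : ℝ := ∫ s in (0 : ℝ)..1, velocity (t * s) α v

lemma continuous_meanVelocity : Continuous fun p : ℝ × ℝ × ℝ => meanVelocity p.1 p.2.1 p.2.2 := by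
  refine intervalIntegral.continuous_parametric_intervalIntegral_of_continuous' ?_ 0 1
  exact continuous_velocity.comp (by fun_prop :
    Continuous fun q : (ℝ × ℝ × ℝ) × ℝ => (q.1.1 * q.2, q.1.2.1, q.1.2.2))

lemma angle_sub_eq_mul_meanVelocity (t α v : ℝ) : angle t α v - α = t * meanVelocity t α v := by
  have hderiv (s : ℝ) (_ : s ∈ uIcc 0 1) :
      HasDerivAt (fun s => angle (t * s) α v) (t * velocity (t * s) α v) s := by
    have hcomp := (isPendSolOn_angle α v univ (t * s) trivial).1.comp s
      ((hasDerivAt_id' s).const_mul t)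
    exact hcomp.congr_deriv (by ring)
  have hcont : Continuous fun s => t * velocity (t * s) α v :=
    continuous_const.mul (continuous_velocity.comp (by fun_prop :
      Continuous fun s : ℝ => (t * s, α, v)))
  rw [meanVelocity, ← intervalIntegral.integral_const_mul,
    intervalIntegral.integral_eq_sub_of_hasDerivAt hderiv (hcont.intervalIntegrable _ _)]
  simp

lemma meanVelocity_zero (α v : ℝ) : meanVelocity 0 α v = v := by
  simp [meanVelocity]

lemma eventually_le_angle {T α v : ℝ}
    (h : IsConfinedArc (fun t => angle t α v) (fun t => velocity t α v) 0 T) :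
    ∀ᶠ q : ℝ × ℝ × ℝ in 𝓝 (T, α, v), ∀ t ∈ Icc 0 q.1, q.2.1 ≤ angle t q.2.1 q.2.2 := by
  have hpos (s : ℝ) (hs : s ∈ Icc (0 : ℝ) 1) : 0 < meanVelocity (T * s) α v := by
    rcases hs.1.eq_or_lt with rfl | hs0
    · simpa [meanVelocity_zero] using h.velocity_start_pos
    · have hTs : 0 < T * s := mul_pos h.lt hs0
      have hlt := h.start_lt ⟨hTs, mul_le_of_le_one_right h.lt.le hs.2⟩
      rw [angle_zero, ← sub_pos, angle_sub_eq_mul_meanVelocity] at hlt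
      exact pos_of_mul_pos_right hlt hTs.le
  have hev := isCompact_Icc.eventually_forall_of_forall_eventually (x₀ := (T, α, v))
    (P := fun q s => 0 < meanVelocity (q.1 * s) q.2.1 q.2.2) fun s hs => by
      refine Continuous.continuousAt ?_ |>.eventually (lt_mem_nhds (hpos s hs))
      exact continuous_meanVelocity.comp (by fun_prop :
        Continuous fun z : (ℝ × ℝ × ℝ) × ℝ => (z.1.1 * z.2, z.1.2.1, z.1.2.2))
  filter_upwards [hev] with q hq t ht
  rcases ht.1.eq_or_lt with rfl | ht0
  · rw [angle_zero]
  have hq1 : 0 < q.1 := ht0.trans_le ht.2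
  have hmean := hq (t / q.1) ⟨by positivity, (div_le_one hq1).2 ht.2⟩
  rw [mul_div_cancel₀ _ hq1.ne'] at hmean
  rw [← sub_nonneg, angle_sub_eq_mul_meanVelocity]
  positivity

end Confinement

section Shooting

/-- The parameters `(T, α, β)` of the shooting problem. -/
def admissible : Set (ℝ × ℝ × ℝ) :=
  {p | 0 < p.1 ∧ p.2.1 ∈ Ico (-1) (π / 2) ∧ 2 * π / 3 ≤ p.2.2}

/-- The initial velocities for which the solution starting at the angle `α` stays above `α` on
`[0, T]` and has reached `β` or more at time `T`. -/
def overshooting (T α β : ℝ) : Set ℝ :=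
  {v | 0 ≤ v ∧ (∀ t ∈ Icc 0 T, α ≤ angle t α v) ∧ β ≤ angle T α v}

/-- The least overshooting initial velocity, which hits `β` exactly at time `T`. -/
noncomputable def shootingVelocity (T α β : ℝ) : ℝ := sInf (overshooting T α β)

variable {T α β v : ℝ}

lemma isClosed_overshooting : IsClosed (overshooting T α β) := by
  have hcont (t : ℝ) : Continuous fun v => angle t α v :=
    contDiff_angle.continuous.comp (by fun_prop : Continuous fun v : ℝ => (t, α, v))
  have hconf : IsClosed {v | ∀ t ∈ Icc 0 T, α ≤ angle t α v} := by
    simp only [ofPred_forall]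
    exact isClosed_biInter fun t _ => isClosed_le continuous_const (hcont t)
  exact isClosed_Ici.inter (hconf.inter (isClosed_le continuous_const (hcont T)))

lemma bddBelow_overshooting : BddBelow (overshooting T α β) := ⟨0, fun _ hv => hv.1⟩

lemma overshooting_nonempty (hT : 0 < T) (hαβ : α ≤ β) : (overshooting T α β).Nonempty := by
  have hslope : 0 ≤ (β - α) / T := div_nonneg (sub_nonneg.2 hαβ) hT.le
  refine ⟨(β - α) / T + T / 2, by positivity, fun t ht => ?_, ?_⟩
  · have hbound := le_angle ht.1 α ((β - α) / T + T / 2)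
    nlinarith [mul_nonneg hslope ht.1, mul_nonneg ht.1 (sub_nonneg.2 ht.2)]
  · have hbound := le_angle hT.le α ((β - α) / T + T / 2)
    have hreach : α + ((β - α) / T + T / 2) * T - T ^ 2 / 2 = β := by
      field_simp
      ring
    linarith

section Admissible

variable (hp : (T, α, β) ∈ admissible)

include hp

lemma isConfinedArc_of_mem_overshooting (hv : v ∈ overshooting T α β) :
    IsConfinedArc (fun t => angle t α v) (fun t => velocity t α v) 0 T where
  sol := isPendSolOn_angle α v _
  lt := hp.1
  start := by simpa using hp.2.1
  velocity_nonneg := by simpa using hv.1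
  confined t ht := by simpa using hv.2.1 t ht
  finish := hp.2.2.trans hv.2.2

lemma pos_of_mem_overshooting (hv : v ∈ overshooting T α β) : 0 < v := by
  simpa using (isConfinedArc_of_mem_overshooting hp hv).velocity_start_pos

lemma shootingVariation_pos (hv : v ∈ overshooting T α β) : 0 < (shootingVariation T α v).1 :=
  (isConfinedArc_of_mem_overshooting hp hv).jacobi_pos (isJacobiFieldOn_shootingVariation α v _)
    (by rw [shootingVariation_zero]) (by rw [shootingVariation_zero])

lemma eventually_mem_overshooting (hv : v ∈ overshooting T α β) :
    ∀ᶠ w in 𝓝 v, β ≤ angle T α w → w ∈ overshooting T α β := by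
  have hconf := (by fun_prop : ContinuousAt (fun w : ℝ => (T, α, w)) v).eventually
    (eventually_le_angle (isConfinedArc_of_mem_overshooting hp hv))
  filter_upwards [hconf, lt_mem_nhds (pos_of_mem_overshooting hp hv)] with w hw hw0 hβ
  exact ⟨hw0.le, hw, hβ⟩

lemma Icc_subset_overshooting {w : ℝ} (hv : v ∈ overshooting T α β) :
    Icc v w ⊆ overshooting T α β := by
  refine (isClosed_overshooting.inter isClosed_Icc).Icc_subset_of_forall_exists_gt hv
    fun u hu y hy => ?_
  have hincr : ∀ᶠ z in 𝓝[>] u, β ≤ angle T α z := by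
    have hslope := (hasDerivAt_angle_initial_velocity T α u).tendsto_slope.mono_left
      (nhdsGT_le_nhdsNE u)
    filter_upwards [hslope.eventually (lt_mem_nhds (shootingVariation_pos hp hu.1)),
      self_mem_nhdsWithin] with z hz huz
    rw [slope_def_field] at hz
    exact hu.1.2.2.trans (sub_pos.1 ((div_pos_iff_of_pos_right (sub_pos.2 huz)).1 hz)).le
  have hstay : ∀ᶠ z in 𝓝[>] u, β ≤ angle T α z → z ∈ overshooting T α β :=
    (eventually_mem_overshooting hp hu.1).filter_mono nhdsWithin_le_nhds
  obtain ⟨z, ⟨hβ, hz⟩, hzy⟩ := ((hincr.and hstay).and (Ioc_mem_nhdsGT hy)).exists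
  exact ⟨z, hz hβ, hzy⟩

lemma strictMonoOn_angle_overshooting :
    StrictMonoOn (fun v => angle T α v) (overshooting T α β) := by
  intro v hv w _ hvw
  exact strictMonoOn_Icc_of_hasDerivAt_pos (fun u _ => hasDerivAt_angle_initial_velocity T α u)
    (fun u hu => shootingVariation_pos hp (Icc_subset_overshooting hp hv hu))
    (left_mem_Icc.2 hvw.le) (right_mem_Icc.2 hvw.le) hvw

lemma shootingVelocity_mem_overshooting : shootingVelocity T α β ∈ overshooting T α β :=
  isClosed_overshooting.csInf_mem
    (overshooting_nonempty hp.1 (by linarith [hp.2.1.2, hp.2.2, pi_pos])) bddBelow_overshooting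

lemma angle_shootingVelocity : angle T α (shootingVelocity T α β) = β := by
  have hmem := shootingVelocity_mem_overshooting hp
  refine hmem.2.2.antisymm' (not_lt.1 fun hlt => ?_)
  have hover := (hasDerivAt_angle_initial_velocity T α _).continuousAt.eventually (lt_mem_nhds hlt)
  have hstay : ∀ᶠ w in 𝓝[<] shootingVelocity T α β, w ∈ overshooting T α β :=
    (((eventually_mem_overshooting hp hmem).and hover).mono fun w hw => hw.1 hw.2.le).filter_mono
      nhdsWithin_le_nhds
  obtain ⟨w, hw, hwlt⟩ := (hstay.and self_mem_nhdsWithin).exists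
  exact (csInf_le bddBelow_overshooting hw).not_gt hwlt

lemma eq_shootingVelocity (hv : v ∈ overshooting T α β) (hβ : angle T α v = β) :
    v = shootingVelocity T α β :=
  (strictMonoOn_angle_overshooting hp).injOn hv (shootingVelocity_mem_overshooting hp)
    (hβ.trans (angle_shootingVelocity hp).symm)

end Admissible

theorem contDiffOn_shootingVelocity :
    ContDiffOn ℝ ∞ (fun p : ℝ × ℝ × ℝ => shootingVelocity p.1 p.2.1 p.2.2) admissible := by
  rintro ⟨T, α, β⟩ hp
  have hmem := shootingVelocity_mem_overshooting hp
  have hangle := angle_shootingVelocity hp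
  set v := shootingVelocity T α β
  have hF : ContDiff ℝ ∞ fun q : (ℝ × ℝ × ℝ) × ℝ => angle q.1.1 q.1.2.1 q.2 - q.1.2.2 := by
    have hangle : ContDiff ℝ ∞ fun q : (ℝ × ℝ × ℝ) × ℝ => angle q.1.1 q.1.2.1 q.2 :=
      contDiff_angle.comp (by fun_prop :
        ContDiff ℝ ∞ fun q : (ℝ × ℝ × ℝ) × ℝ => (q.1.1, q.1.2.1, q.2))
    fun_prop
  obtain ⟨g, hg, hgv, hroot⟩ := exists_contDiffAt_implicit_of_deriv_ne_zero (by simp)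
    (hF.contDiffAt (x := ((T, α, β), v)))
    ((hasDerivAt_angle_initial_velocity T α v).sub_const β) (shootingVariation_pos hp hmem).ne'
  have hstay := (by fun_prop : ContinuousAt (fun p : ℝ × ℝ × ℝ => (p.1, p.2.1, g p)) (T, α, β))
    |>.eventually (hgv.symm ▸ eventually_le_angle (isConfinedArc_of_mem_overshooting hp hmem))
  have hpos := hg.continuousAt.eventually (lt_mem_nhds (hgv.symm ▸ pos_of_mem_overshooting hp hmem))
  have heq : ∀ᶠ p in 𝓝 (T, α, β), p ∈ admissible → shootingVelocity p.1 p.2.1 p.2.2 = g p := by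
    filter_upwards [hroot, hstay, hpos] with p hroot hstay hpos hp
    have hhit : angle p.1 p.2.1 (g p) = p.2.2 := by simpa [hangle, sub_eq_zero] using hroot
    exact (eq_shootingVelocity hp ⟨hpos.le, hstay, hhit.ge⟩ hhit).symm
  exact hg.contDiffWithinAt.congr_of_eventuallyEq
    (eventually_nhdsWithin_iff.2 heq) hgv.symm

end Shooting

lemma pendBVP_angle_shootingVelocity {T α β : ℝ} (hp : (T, α, β) ∈ admissible) :
    PendBVP (fun t => angle t α (shootingVelocity T α β)) T α β := by
  have hmem := shootingVelocity_mem_overshooting hp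
  refine ⟨⟨_, isPendSolOn_angle α _ _⟩, angle_zero _ _, angle_shootingVelocity hp,
    fun t ht => ⟨hmem.2.1 t ht, ?_⟩⟩
  have hmax := (isConfinedArc_of_mem_overshooting hp hmem).le_max_pi
    (isJacobiFieldOn_shootingVariation α _ _) (by rw [shootingVariation_zero])
    (by rw [shootingVariation_zero]) ht
  rwa [angle_shootingVelocity hp] at hmax

lemma eqOn_angle_shootingVelocity {T α β : ℝ} (hp : (T, α, β) ∈ admissible) {y : ℝ → ℝ}
    (hy : PendBVP y T α β) : EqOn y (fun t => angle t α (shootingVelocity T α β)) (Icc 0 T) := by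
  obtain ⟨⟨v, hsol⟩, rfl, rfl, hconf⟩ := hy
  have hT : 0 ≤ T := hp.1.le
  have heq := eqOn_angle hsol
  have hv : 0 ≤ v 0 := nonneg_of_hasDerivAt_of_forall_left_le hp.1
    (hsol 0 (left_mem_Icc.2 hT)).1 fun t ht => (hconf t ht).1
  have hend := (heq (right_mem_Icc.2 hT)).symm
  have hshoot := eq_shootingVelocity hp
    ⟨hv, fun t ht => (hconf t ht).1.trans_eq (heq ht), hend.ge⟩ hend
  rwa [hshoot] at heq

end Pendulum

open Pendulum in
theorem pendulum_lemma_case1_general :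
    ∃ F : ℝ → ℝ → ℝ → ℝ → ℝ,
      ContDiffOn ℝ ∞ (fun p : ℝ × ℝ × ℝ × ℝ => F p.1 p.2.1 p.2.2.1 p.2.2.2)
        {p : ℝ × ℝ × ℝ × ℝ |
          0 < p.1 ∧ p.2.1 ∈ Ico (-1) (Real.pi / 2) ∧ 2 * Real.pi / 3 ≤ p.2.2.1} ∧
      ∀ T α β : ℝ, 0 < T → α ∈ Ico (-1) (Real.pi / 2) → 2 * Real.pi / 3 ≤ β →
        PendBVP (F T α β) T α β ∧
        ∀ y : ℝ → ℝ, PendBVP y T α β → EqOn y (F T α β) (Icc 0 T) := by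
  refine ⟨fun T α β t => angle t α (shootingVelocity T α β), ?_, fun T α β hT hα hβ =>
    ⟨pendBVP_angle_shootingVelocity ⟨hT, hα, hβ⟩,
      fun y => eqOn_angle_shootingVelocity ⟨hT, hα, hβ⟩⟩⟩
  have hshoot : ContDiffOn ℝ ∞
      (fun p : ℝ × ℝ × ℝ × ℝ => shootingVelocity p.1 p.2.1 p.2.2.1)
      {p | (p.1, p.2.1, p.2.2.1) ∈ admissible} :=
    contDiffOn_shootingVelocity.comp (f := fun p : ℝ × ℝ × ℝ × ℝ => (p.1, p.2.1, p.2.2.1))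
      (by fun_prop) fun _ hp => hp
  exact contDiff_angle.comp_contDiffOn (by fun_prop :
    ContDiffOn ℝ ∞ (fun p : ℝ × ℝ × ℝ × ℝ =>
      (p.2.2.2, p.2.1, shootingVelocity p.1 p.2.1 p.2.2.1)) _)

/-- **Pendulum Lemma, case 1.** For `|α| ≤ 1`, `|β − π| < 1`, `T > 0` there is a
unique solution of `ẍ + sin x = 0` with `x(0) = α`, `x(T) = β` and
`α ≤ x(t) ≤ max(β, π)` on `[0,T]`; it depends smoothly on `(T, α, β)`. -/
theorem pendulum_lemma_case1 :
    ∃ F : ℝ → ℝ → ℝ → ℝ → ℝ,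
      ContDiffOn ℝ (⊤ : ℕ∞) (fun p : ℝ × ℝ × ℝ × ℝ => F p.1 p.2.1 p.2.2.1 p.2.2.2)
        {p : ℝ × ℝ × ℝ × ℝ |
          0 < p.1 ∧ |p.2.1| ≤ 1 ∧ |p.2.2.1 - Real.pi| < 1 ∧ p.2.2.2 ∈ Set.Icc 0 p.1} ∧
      ∀ T α β : ℝ, 0 < T → |α| ≤ 1 → |β - Real.pi| < 1 →
        PendBVP (F T α β) T α β ∧
        ∀ y : ℝ → ℝ, PendBVP y T α β → Set.EqOn y (F T α β) (Set.Icc 0 T) := by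
  have hα_mem {α : ℝ} (hα : |α| ≤ 1) : α ∈ Ico (-1) (Real.pi / 2) :=
    ⟨(abs_le.1 hα).1, by linarith [(abs_le.1 hα).2, Real.pi_gt_three]⟩
  have hβ_le {β : ℝ} (hβ : |β - Real.pi| < 1) : 2 * Real.pi / 3 ≤ β := by
    linarith [(abs_lt.1 hβ).1, Real.pi_gt_three]
  obtain ⟨F, hF, hsol⟩ := pendulum_lemma_case1_general
  exact ⟨F, hF.mono fun p hp => ⟨hp.1, hα_mem hp.2.1, hβ_le hp.2.2.1⟩,
    fun T α β hT hα hβ => hsol T α β hT (hα_mem hα) (hβ_le hβ)⟩
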